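/- arXiv:1705.01270 — 3 statements merged into one kernel-verified Lean document; each statement's English description precedes it below -/
import Mathlib

section
/- (Strong α-invariance of the spectral potential) For all φ, ψ ∈ L^∞(X, m), one has λ(φ + ψ ∘ α) = λ(φ + ψ). -/
open MeasureTheory Filter
open scoped ENNReal NNReal

noncomputable section

/-- The Birkhoff sum `S_n φ (x) = φ(x) + φ(α x) + ⋯ + φ(α^{n-1} x)`. -/
def birkhoff {X : Type*} (α : X → X) (φ : X → ℝ) (n : ℕ) (x : X) : ℝ :=
  ∑ i ∈ Finset.range n, φ (α^[i] x)

/-- Boundedness of the shift operator `A f = f ∘ α` on `L¹(X, m)`: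
there is `C > 0` with `m (α⁻¹ G) ≤ C · m G` for all measurable `G`. -/
def ShiftBounded {X : Type*} [MeasurableSpace X] (m : Measure X) (α : X → X) : Prop :=
  ∃ C : ℝ≥0, 0 < C ∧ ∀ G : Set X, MeasurableSet G → m (α ⁻¹' G) ≤ (C : ℝ≥0∞) * m G

/-- The operator norm `‖(e^ψ A^s)^k‖` of the `k`-th power of the weighted shift operator
`e^ψ A^s` (with base shift `α^[s]`) acting on `L¹(X, m)`, computed as the supremum of
`‖(e^ψ A^s)^k f‖₁` over `f` with `‖f‖₁ = 1`. -/
def weightedOpNorm {X : Type*} [MeasurableSpace X] (m : Measure X) (α : X → X) (s : ℕ)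
    (ψ : X → ℝ) (k : ℕ) : ℝ :=
  sSup {r : ℝ | ∃ f : X → ℝ, Integrable f m ∧ (∫ x, |f x| ∂m) = 1 ∧
    r = ∫ x, Real.exp (∑ j ∈ Finset.range k, ψ (α^[s * j] x)) * |f (α^[s * k] x)| ∂m}

/-- `λ(ψ, A^s)`: the logarithm of the spectral radius of `e^ψ A^s` on `L¹(X, m)`. -/
def spectralPotentialBase {X : Type*} [MeasurableSpace X] (m : Measure X) (α : X → X)
    (s : ℕ) (ψ : X → ℝ) : ℝ :=
  limUnder atTop fun k : ℕ => Real.log (weightedOpNorm m α s ψ k) / (k : ℝ)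

/-- The spectral potential `λ(φ) = lim (1/n) ln ‖A_φⁿ‖`. -/
def spectralPotential {X : Type*} [MeasurableSpace X] (m : Measure X) (α : X → X)
    (φ : X → ℝ) : ℝ :=
  spectralPotentialBase m α 1 φ

/-- A functional on `L^∞(X, m)` is positive if it is nonnegative on nonnegative functions. -/
def IsPositiveFunctional {X : Type*} [MeasurableSpace X] (m : Measure X)
    (μ : Lp ℝ ⊤ m → ℝ) : Prop :=
  ∀ φ : Lp ℝ ⊤ m, (0 : X → ℝ) ≤ᵐ[m] ⇑φ → 0 ≤ μ φ

/-- A functional on `L^∞(X, m)` is normalized if its value on the unit function is `1`. -/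
def IsNormalizedFunctional {X : Type*} [MeasurableSpace X] (m : Measure X)
    (μ : Lp ℝ ⊤ m → ℝ) : Prop :=
  ∀ φ : Lp ℝ ⊤ m, ⇑φ =ᵐ[m] (fun _ => (1 : ℝ)) → μ φ = 1

/-- A functional `μ` on `L^∞(X, m)` is `α`-invariant if `μ[f ∘ α] = μ[f]`. -/
def IsInvariantFunctional {X : Type*} [MeasurableSpace X] (m : Measure X) (α : X → X)
    (μ : Lp ℝ ⊤ m → ℝ) : Prop :=
  ∀ φ ψ : Lp ℝ ⊤ m, ⇑ψ =ᵐ[m] (fun x => φ (α x)) → μ ψ = μ φ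

/-- `μ ∈ M_α(X, m)`: positive, normalized and `α`-invariant. -/
def MemMalpha {X : Type*} [MeasurableSpace X] (m : Measure X) (α : X → X)
    (μ : Lp ℝ ⊤ m → ℝ) : Prop :=
  IsPositiveFunctional m μ ∧ IsNormalizedFunctional m μ ∧ IsInvariantFunctional m α μ

/-- A measurable partition of unity on `X` made of nonnegative elements of `L^∞(X, m)`
summing to `1`. -/
structure PartUnity {X : Type*} [MeasurableSpace X] (m : Measure X) where
  k : ℕ
  g : Fin k → Lp ℝ ⊤ m
  nonneg : ∀ i, (0 : X → ℝ) ≤ᵐ[m] ⇑(g i)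
  sum_one : ∀ᵐ x ∂m, (∑ i, (g i : Lp ℝ ⊤ m) x) = 1

/-- The summand `a · ln (r / a)` with the conventions: it is `0` if `a = 0`, and `-∞` if
`a ≠ 0` and `r = 0`. -/
def entTerm (a r : ℝ) : EReal :=
  if a = 0 then 0 else if r = 0 then ⊥ else ((a * Real.log (r / a) : ℝ) : EReal)

/-- `τₙ(μ, D)`. -/
def tauN {X : Type*} [MeasurableSpace X] (m : Measure X) (α : X → X)
    (μ : Lp ℝ ⊤ m → ℝ) (n : ℕ) (D : PartUnity m) : EReal :=
  sSup {r : EReal | ∃ f : X → ℝ, Integrable f m ∧ (∫ x, |f x| ∂m) = 1 ∧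
    r = ∑ i, entTerm (μ (D.g i)) (∫ x, (D.g i : Lp ℝ ⊤ m) x * |f (α^[n] x)| ∂m)}

/-- The t-entropy `τ(μ) = inf_{n, D} τₙ(μ, D) / n`. -/
def tEntropy {X : Type*} [MeasurableSpace X] (m : Measure X) (α : X → X)
    (μ : Lp ℝ ⊤ m → ℝ) : EReal :=
  ⨅ (n : ℕ) (_ : 0 < n) (D : PartUnity m), (((n : ℝ)⁻¹ : ℝ) : EReal) * tauN m α μ n D

/-- The t-entropy extended by `τ(μ) = -∞` outside `M_α(X, m)`. -/
def tEntropyExt {X : Type*} [MeasurableSpace X] (m : Measure X) (α : X → X)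
    (μ : Lp ℝ ⊤ m → ℝ) : EReal :=
  @ite _ (MemMalpha m α μ) (Classical.dec _) (tEntropy m α μ) ⊥

lemma helper_sSup_le {ι : Type*} (P : ι → Prop) (a b : ι → ℝ) (K : ℝ) (hK : 0 < K)
    (hb0 : ∀ i, 0 ≤ b i)
    (hab : ∀ i, a i ≤ K * b i) (hba : ∀ i, b i ≤ K * a i) :
    sSup {r : ℝ | ∃ i, P i ∧ r = a i} ≤ K * sSup {r : ℝ | ∃ i, P i ∧ r = b i} := by
  by_cases hB : BddAbove {r : ℝ | ∃ i, P i ∧ r = b i}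
  · have h0 : 0 ≤ sSup {r : ℝ | ∃ i, P i ∧ r = b i} := by
      apply Real.sSup_nonneg
      rintro r ⟨i, _, rfl⟩
      exact hb0 i
    apply Real.sSup_le _ (by positivity)
    rintro r ⟨i, hi, rfl⟩
    exact (hab i).trans (mul_le_mul_of_nonneg_left (le_csSup hB ⟨i, hi, rfl⟩) hK.le)
  · have hA : ¬ BddAbove {r : ℝ | ∃ i, P i ∧ r = a i} := by
      rintro ⟨c, hc⟩
      apply hB
      refine ⟨K * c, ?_⟩
      rintro r ⟨i, hi, rfl⟩
      exact (hba i).trans (mul_le_mul_of_nonneg_left (hc ⟨i, hi, rfl⟩) hK.le)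
    rw [Real.sSup_of_not_bddAbove hA, Real.sSup_of_not_bddAbove hB]
    simp

lemma helper_log {a b M : ℝ} (ha : 0 ≤ a) (hb : 0 ≤ b)
    (hab : a ≤ Real.exp M * b) (hba : b ≤ Real.exp M * a) (hM : 0 ≤ M) :
    |Real.log a - Real.log b| ≤ M := by
  rcases ha.eq_or_lt with rfl | ha
  · have : b = 0 := by simp at hba; linarith
    subst this; simpa
  rcases hb.eq_or_lt with rfl | hb
  · simp at hab; linarith
  have h1 := Real.log_le_log ha hab
  have h2 := Real.log_le_log hb hba
  rw [Real.log_mul (Real.exp_pos _).ne' hb.ne', Real.log_exp] at h1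
  rw [Real.log_mul (Real.exp_pos _).ne' ha.ne', Real.log_exp] at h2
  rw [abs_le]; constructor <;> linarith

/-- Comparison of integrals of `exp (e + d) * g` and `exp e * g` for bounded `d`. -/
lemma helper_integral {X : Type*} [MeasurableSpace X] (m : Measure X) (e₁ e₂ g : X → ℝ) (M : ℝ)
    (hg : ∀ x, 0 ≤ g x) (hmeas : Measurable (fun x => e₁ x - e₂ x))
    (hd : ∀ᵐ x ∂m, |e₁ x - e₂ x| ≤ M) :
    (∫ x, Real.exp (e₁ x) * g x ∂m) ≤ Real.exp M * ∫ x, Real.exp (e₂ x) * g x ∂m := by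
  have hrw : (fun x => Real.exp (e₁ x) * g x)
      = fun x => Real.exp (e₁ x - e₂ x) * (Real.exp (e₂ x) * g x) := by
    funext x; rw [← mul_assoc, ← Real.exp_add]; congr 2; ring
  have hrw2 : (fun x => Real.exp (e₂ x) * g x)
      = fun x => Real.exp (-(e₁ x - e₂ x)) * (Real.exp (e₁ x) * g x) := by
    funext x; rw [← mul_assoc, ← Real.exp_add]; congr 2; ring
  have hnn : 0 ≤ ∫ x, Real.exp (e₂ x) * g x ∂m :=
    integral_nonneg fun x => mul_nonneg (Real.exp_pos _).le (hg x)
  by_cases h1 : Integrable (fun x => Real.exp (e₁ x) * g x) m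
  · have h2 : Integrable (fun x => Real.exp (e₂ x) * g x) m := by
      rw [hrw2]
      refine h1.bdd_mul (c := Real.exp M) hmeas.neg.exp.aestronglyMeasurable ?_
      filter_upwards [hd] with x hx
      rw [Real.norm_eq_abs, Real.abs_exp]
      exact Real.exp_le_exp.2 (by linarith [(abs_le.1 hx).1])
    rw [← integral_const_mul]
    refine integral_mono_ae h1 (h2.const_mul _) ?_
    filter_upwards [hd] with x hx
    rw [congrFun hrw x]
    exact mul_le_mul_of_nonneg_right (Real.exp_le_exp.2 (abs_le.1 hx).2)
      (mul_nonneg (Real.exp_pos _).le (hg x))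
  · rw [integral_undef h1]; positivity

lemma helper_opNorm {X : Type*} [MeasurableSpace X] (m : Measure X) (α : X → X)
    (u v : X → ℝ) (k : ℕ) (M : ℝ)
    (hmeas : Measurable (fun x => (∑ j ∈ Finset.range k, u (α^[1 * j] x))
      - ∑ j ∈ Finset.range k, v (α^[1 * j] x)))
    (hd : ∀ᵐ x ∂m, |(∑ j ∈ Finset.range k, u (α^[1 * j] x))
      - ∑ j ∈ Finset.range k, v (α^[1 * j] x)| ≤ M) :
    weightedOpNorm m α 1 u k ≤ Real.exp M * weightedOpNorm m α 1 v k := by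
  have := helper_sSup_le (fun f : X → ℝ => Integrable f m ∧ (∫ x, |f x| ∂m) = 1)
    (fun f => ∫ x, Real.exp (∑ j ∈ Finset.range k, u (α^[1 * j] x)) * |f (α^[1 * k] x)| ∂m)
    (fun f => ∫ x, Real.exp (∑ j ∈ Finset.range k, v (α^[1 * j] x)) * |f (α^[1 * k] x)| ∂m)
    (Real.exp M) (Real.exp_pos M)
    (fun f => integral_nonneg fun x => mul_nonneg (Real.exp_pos _).le (abs_nonneg _))
    (fun f => helper_integral m _ _ _ M (fun x => abs_nonneg _) hmeas hd)
    (fun f => helper_integral m _ _ _ M (fun x => abs_nonneg _)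
      (by
        convert hmeas.neg using 1
        funext x
        simp only [Pi.neg_apply, neg_sub]) (by simpa only [abs_sub_comm] using hd))
  simpa only [weightedOpNorm, and_assoc] using this

lemma helper_opNorm_nonneg {X : Type*} [MeasurableSpace X] (m : Measure X) (α : X → X)
    (u : X → ℝ) (k : ℕ) : 0 ≤ weightedOpNorm m α 1 u k := by
  apply Real.sSup_nonneg
  rintro r ⟨f, _, _, rfl⟩
  exact integral_nonneg fun x => mul_nonneg (Real.exp_pos _).le (abs_nonneg _)

lemma helper_limUnder (a b : ℕ → ℝ) (h : Tendsto (fun k => a k - b k) atTop (nhds 0)) :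
    limUnder atTop a = limUnder atTop b := by
  have key : ∀ c, map a atTop ≤ nhds c ↔ map b atTop ≤ nhds c := by
    intro c
    constructor
    · intro ha
      have ha' : Tendsto a atTop (nhds c) := ha
      have := ha'.sub h
      simp only [sub_sub_cancel, sub_zero] at this
      exact this
    · intro hb
      have hb' : Tendsto b atTop (nhds c) := hb
      have := h.add hb'
      simp only [sub_add_cancel, zero_add] at this
      exact this
  unfold limUnder lim
  simp only [key]

/-- **Lemma 6 e)** (strong `α`-invariance): `λ(φ + ψ ∘ α) = λ(φ + ψ)`. -/
theorem spectralPotential_strong_invariance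
    {X : Type*} [MeasurableSpace X] (m : Measure X) (α : X → X)
    (hα : Measurable α) (hbdd : ShiftBounded m α)
    (φ ψ : Lp ℝ ⊤ m) :
    spectralPotential m α (fun x => φ x + ψ (α x)) =
      spectralPotential m α (fun x => φ x + ψ x) := by
  obtain ⟨C, -, hC⟩ := hbdd
  have hq : Measure.QuasiMeasurePreserving α m m := by
    refine ⟨hα, Measure.AbsolutelyContinuous.mk fun s hs h0 => ?_⟩
    rw [Measure.map_apply hα hs]
    simpa [h0] using hC s hs
  have hψ : ∀ᵐ x ∂m, |ψ x| ≤ ‖ψ‖ := by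
    have hfin : eLpNormEssSup ψ m ≠ ⊤ := by
      rw [← eLpNorm_exponent_top]; exact Lp.eLpNorm_ne_top ψ
    filter_upwards [ae_le_eLpNormEssSup (f := ψ) (μ := m)] with x hx
    rw [Lp.norm_def, eLpNorm_exponent_top, ← Real.norm_eq_abs, ← toReal_enorm]
    exact ENNReal.toReal_mono hfin hx
  have hψm : Measurable ψ := (Lp.stronglyMeasurable ψ).measurable
  have hdiff : ∀ k x, (∑ j ∈ Finset.range k, (φ (α^[1 * j] x) + ψ (α (α^[1 * j] x))))
      - (∑ j ∈ Finset.range k, (φ (α^[1 * j] x) + ψ (α^[1 * j] x)))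
      = ψ (α^[k] x) - ψ x := by
    intro k x
    rw [← Finset.sum_sub_distrib]
    have := Finset.sum_range_sub (fun j => ψ (α^[j] x)) k
    simp only [Function.iterate_succ_apply', Function.iterate_zero, id] at this
    rw [← this]
    refine Finset.sum_congr rfl fun j _ => ?_
    rw [one_mul]; ring
  have hm : ∀ k, Measurable (fun x => ψ (α^[k] x) - ψ x) := fun k =>
    (hψm.comp (hα.iterate k)).sub hψm
  have hb : ∀ k, ∀ᵐ x ∂m, |ψ (α^[k] x) - ψ x| ≤ 2 * ‖ψ‖ := by
    intro k
    filter_upwards [hψ, (hq.iterate k).ae hψ] with x h1 h2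
    have := abs_sub (ψ (α^[k] x)) (ψ x)
    linarith
  have hN : ∀ k, |Real.log (weightedOpNorm m α 1 (fun x => φ x + ψ (α x)) k)
      - Real.log (weightedOpNorm m α 1 (fun x => φ x + ψ x) k)| ≤ 2 * ‖ψ‖ := by
    intro k
    refine helper_log (helper_opNorm_nonneg _ _ _ _) (helper_opNorm_nonneg _ _ _ _)
      (helper_opNorm _ _ _ _ _ _ ?_ ?_) (helper_opNorm _ _ _ _ _ _ ?_ ?_) (by positivity)
    · simpa only [hdiff] using hm k
    · simpa only [hdiff] using hb k
    · have := (hm k).neg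
      convert this using 1
      funext x
      simp only [Pi.neg_apply, ← hdiff, neg_sub]
    · simp only [abs_sub_comm (∑ j ∈ Finset.range k, (φ (α^[1 * j] _) + ψ (α^[1 * j] _)))]
      simpa only [hdiff] using hb k
  apply helper_limUnder
  refine squeeze_zero_norm (a := fun k : ℕ => 2 * ‖ψ‖ / (k : ℝ)) (fun k => ?_)
    (tendsto_const_div_atTop_nhds_zero_nat _)
  rw [← sub_div, Real.norm_eq_abs, abs_div, Nat.abs_cast]
  exact div_le_div_of_nonneg_right (hN k) (Nat.cast_nonneg k)

end
end

section
/- Let B(X, 𝔄) denote the Banach space of bounded measurable functions on X with the supremum norm, and let λ and τ be defined on B(X, 𝔄) and its continuous dual by the same formulae as on L^∞(X, m). If μ is a continuous linear functional on B(X, 𝔄) that does not factor through the quotient map B(X, 𝔄) → L^∞(X, m) (i.e. μ is nonzero on some bounded measurable function vanishing m-almost everywhere), then τ(μ) = −∞ and inf over φ ∈ B(X, 𝔄) of ( λ(φ) − μ[φ] ) = −∞. -/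
open MeasureTheory Filter
open scoped ENNReal NNReal

noncomputable section

/-- `f` belongs to `B(X, 𝔄)`: it is measurable and bounded. -/
def IsBddMeas {X : Type*} [MeasurableSpace X] (f : X → ℝ) : Prop :=
  Measurable f ∧ ∃ C : ℝ, ∀ x, |f x| ≤ C

/-- `μ` represents a continuous linear functional on the Banach space `B(X, 𝔄)` of bounded
measurable functions with the supremum norm: it is additive, homogeneous, and bounded with
respect to the supremum norm on `B(X, 𝔄)`. -/
def IsBFunctional {X : Type*} [MeasurableSpace X] (μ : (X → ℝ) → ℝ) : Prop :=
  (∀ f g : X → ℝ, IsBddMeas f → IsBddMeas g → μ (f + g) = μ f + μ g) ∧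
  (∀ (c : ℝ) (f : X → ℝ), IsBddMeas f → μ (c • f) = c * μ f) ∧
  ∃ K : ℝ, ∀ f : X → ℝ, IsBddMeas f → |μ f| ≤ K * (⨆ x, |f x|)

/-- A measurable partition of unity on `X` made of nonnegative functions in `B(X, 𝔄)`
summing to `1`. -/
structure BPartUnity (X : Type*) [MeasurableSpace X] where
  k : ℕ
  g : Fin k → X → ℝ
  meas : ∀ i, Measurable (g i)
  nonneg : ∀ i x, 0 ≤ g i x
  sum_one : ∀ x, ∑ i, g i x = 1

/-- `μ ∈ M_α(X, 𝔄)`: a positive normalized `α`-invariant continuous linear functional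
on `B(X, 𝔄)`. -/
def MemMalphaB {X : Type*} [MeasurableSpace X] (α : X → X) (μ : (X → ℝ) → ℝ) : Prop :=
  IsBFunctional μ ∧ (∀ f : X → ℝ, IsBddMeas f → (∀ x, 0 ≤ f x) → 0 ≤ μ f) ∧
  μ (fun _ => 1) = 1 ∧ ∀ f : X → ℝ, IsBddMeas f → μ (f ∘ α) = μ f

def tauNB {X : Type*} [MeasurableSpace X] (m : Measure X) (α : X → X)
    (μ : (X → ℝ) → ℝ) (n : ℕ) (D : BPartUnity X) : EReal :=
  sSup {r : EReal | ∃ f : X → ℝ, Integrable f m ∧ (∫ x, |f x| ∂m) = 1 ∧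
    r = ∑ i, entTerm (μ (D.g i)) (∫ x, D.g i x * |f (α^[n] x)| ∂m)}

def tEntropyB {X : Type*} [MeasurableSpace X] (m : Measure X) (α : X → X)
    (μ : (X → ℝ) → ℝ) : EReal :=
  ⨅ (n : ℕ) (_ : 0 < n) (D : BPartUnity X), (((n : ℝ)⁻¹ : ℝ) : EReal) * tauNB m α μ n D

/-- The t-entropy on the dual of `B(X, 𝔄)`, extended by `-∞` outside `M_α(X, 𝔄)`. -/
def tEntropyBExt {X : Type*} [MeasurableSpace X] (m : Measure X) (α : X → X)
    (μ : (X → ℝ) → ℝ) : EReal :=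
  @ite _ (MemMalphaB α μ) (Classical.dec _) (tEntropyB m α μ) ⊥


/-- **Lemma 11**: if a continuous linear functional `μ` on `B(X, 𝔄)` does not factor
through `L^∞(X, m)` (i.e. it is nonzero on some bounded measurable function vanishing
`m`-almost everywhere), then `τ(μ) = −∞` and `inf_{φ ∈ B(X, 𝔄)} (λ(φ) − μ[φ]) = −∞`. -/
theorem tEntropyBExt_eq_bot_of_not_factoring
    {X : Type*} [MeasurableSpace X] (m : Measure X) (α : X → X)
    (hα : Measurable α) (hbdd : ShiftBounded m α)
    (μ : (X → ℝ) → ℝ) (hμ : IsBFunctional μ)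
    (φ₀ : X → ℝ) (h₀ : IsBddMeas φ₀) (h₀ae : φ₀ =ᵐ[m] (fun _ => (0 : ℝ)))
    (hμ₀ : μ φ₀ ≠ 0) :
    tEntropyBExt m α μ = ⊥ ∧
    (⨅ φ : {φ : X → ℝ // IsBddMeas φ},
        ((spectralPotential m α φ.1 - μ φ.1 : ℝ) : EReal)) = ⊥ := by
  refine ⟨?_, ?_⟩
  · unfold tEntropyBExt
    split_ifs with hM
    swap
    · rfl
    obtain ⟨⟨hadd, hsmul, -⟩, hpos, -, -⟩ := hM
    obtain ⟨hφm, C, hC⟩ := h₀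
    set A : Set X := {x | φ₀ x ≠ 0} with hA
    have hAm : MeasurableSet A := (measurableSet_singleton (0 : ℝ)).compl.preimage hφm
    have hA0 : m A = 0 := h₀ae
    have hind : Measurable (A.indicator (fun _ => (1 : ℝ))) := measurable_const.indicator hAm
    have hindb : IsBddMeas (A.indicator (fun _ => (1 : ℝ))) := by
      refine ⟨hind, 1, fun x => ?_⟩
      by_cases hx : x ∈ A <;> simp [hx]
    have hφb : IsBddMeas φ₀ := ⟨hφm, C, hC⟩
    have hcb : IsBddMeas (C • A.indicator (fun _ => (1 : ℝ))) := by
      refine ⟨hind.const_smul C, |C|, fun x => ?_⟩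
      by_cases hx : x ∈ A <;> simp [hx]
    have hnb : IsBddMeas ((-1 : ℝ) • φ₀) := by
      refine ⟨hφm.const_smul _, C, fun x => ?_⟩
      simpa using hC x
    have hsum : ∀ f : X → ℝ, IsBddMeas f → (∀ x, |f x| = |φ₀ x|) →
        0 ≤ C * μ (A.indicator (fun _ => (1 : ℝ))) + μ f := by
      intro f hf hff
      rw [← hsmul C _ hindb, ← hadd _ _ hcb hf]
      refine hpos _ ⟨hcb.1.add hf.1, |C| + C, fun x => ?_⟩ (fun x => ?_)
      · refine (abs_add_le _ _).trans (add_le_add ?_ ((hff x).le.trans (hC x)))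
        by_cases hx : x ∈ A <;> simp [hx]
      · have h1 := hC x
        rw [← hff x] at h1
        have h2 := neg_abs_le (f x)
        by_cases hx : x ∈ A
        · simp [hx]; linarith
        · have h3 : φ₀ x = 0 := by simpa [hA] using hx
          have h4 : f x = 0 := by simpa [h3] using hff x
          simp [hx, h4]
    have hne : μ (A.indicator (fun _ => (1 : ℝ))) ≠ 0 := by
      intro h
      have h1 := hsum φ₀ hφb (fun _ => rfl)
      have h2 := hsum _ hnb (fun x => by simp)
      rw [hsmul _ _ hφb] at h2
      rw [h] at h1 h2
      exact hμ₀ (by linarith)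
    let D : BPartUnity X :=
      { k := 2
        g := ![A.indicator (fun _ => (1 : ℝ)), Aᶜ.indicator (fun _ => (1 : ℝ))]
        meas := by
          intro i
          fin_cases i
          · exact hind
          · exact measurable_const.indicator hAm.compl
        nonneg := by
          intro i x
          fin_cases i
          · exact Set.indicator_nonneg (fun _ _ => zero_le_one) x
          · exact Set.indicator_nonneg (fun _ _ => zero_le_one) x
        sum_one := by
          intro x
          by_cases hx : x ∈ A <;> simp [Fin.sum_univ_two, hx] }
    have htau : tauNB m α μ 1 D = ⊥ := by
      unfold tauNB
      rw [sSup_eq_bot]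
      rintro r ⟨f, -, -, rfl⟩
      have hint : (∫ x, D.g (0 : Fin 2) x * |f (α^[1] x)| ∂m) = 0 := by
        apply integral_eq_zero_of_ae
        filter_upwards [h₀ae] with x hx
        have hx' : x ∉ A := by simpa [hA] using hx
        change A.indicator (fun _ => (1 : ℝ)) x * _ = 0
        simp [hx']
      have h0 : entTerm (μ (D.g (0 : Fin 2))) (∫ x, D.g (0 : Fin 2) x * |f (α^[1] x)| ∂m) = ⊥ := by
        rw [hint]
        have : μ (D.g (0 : Fin 2)) ≠ 0 := hne
        simp [entTerm, this]
      change ∑ i : Fin 2, entTerm (μ (D.g i)) (∫ x, D.g i x * |f (α^[1] x)| ∂m) = ⊥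
      rw [Fin.sum_univ_two, h0, EReal.bot_add]
    rw [eq_bot_iff]
    unfold tEntropyB
    refine (iInf_le_of_le 1 (iInf_le_of_le one_pos (iInf_le_of_le D ?_)))
    rw [htau]
    simp
  · obtain ⟨C, -, hC⟩ := hbdd
    have hq : Measure.QuasiMeasurePreserving α m m := by
      refine ⟨hα, Measure.AbsolutelyContinuous.mk fun s hs h => ?_⟩
      rw [Measure.map_apply hα hs]
      have := hC s hs
      rw [h, mul_zero] at this
      exact le_antisymm this bot_le
    have hz : ∀ j : ℕ, ∀ᵐ x ∂m, φ₀ (α^[j] x) = 0 := fun j => (hq.iterate j).ae h₀ae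
    have hz' : ∀ᵐ x ∂m, ∀ j : ℕ, φ₀ (α^[j] x) = 0 := ae_all_iff.2 hz
    have hsp : ∀ t : ℝ, spectralPotential m α (t • φ₀) = spectralPotential m α (fun _ => 0) := by
      intro t
      have : ∀ k, weightedOpNorm m α 1 (t • φ₀) k = weightedOpNorm m α 1 (fun _ => 0) k := by
        intro k
        unfold weightedOpNorm
        have : ∀ f : X → ℝ,
            (∫ x, Real.exp (∑ j ∈ Finset.range k, (t • φ₀) (α^[1 * j] x))
              * |f (α^[1 * k] x)| ∂m) =
            ∫ x, Real.exp (∑ j ∈ Finset.range k, (fun _ => (0 : ℝ)) (α^[1 * j] x))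
              * |f (α^[1 * k] x)| ∂m := by
          intro f
          apply integral_congr_ae
          filter_upwards [hz'] with x hx
          simp [hx]
        simp only [this]
      unfold spectralPotential spectralPotentialBase
      simp only [this]
    rw [eq_bot_iff]
    refine le_of_forall_gt fun y hy => ?_
    obtain ⟨r, -, hr⟩ := EReal.lt_iff_exists_real_btwn.1 hy
    have hb : ∀ t : ℝ, IsBddMeas (t • φ₀) := by
      intro t
      obtain ⟨hm, K, hK⟩ := h₀
      refine ⟨hm.const_smul t, |t| * K, fun x => ?_⟩
      simpa [abs_mul] using mul_le_mul_of_nonneg_left (hK x) (abs_nonneg t)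
    set c := spectralPotential m α (fun _ => 0) with hc
    refine lt_of_le_of_lt (iInf_le _ ⟨_, hb ((c - r) / μ φ₀)⟩) ?_
    have he : spectralPotential m α (((c - r) / μ φ₀) • φ₀) - μ (((c - r) / μ φ₀) • φ₀) = r := by
      rw [hsp, hμ.2.1 _ _ h₀, div_mul_cancel₀ _ hμ₀]
      ring
    simp only [he]
    exact hr


end
end

section
/- The t-entropy, extended by τ(μ) := −∞ for functionals μ not in M_α(X, m), is a concave and weak-* upper semicontinuous function on the continuous dual space of L^∞(X, m). -/
open MeasureTheory Filter
open scoped ENNReal NNReal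

noncomputable section

theorem entTerm_ne_top (a r : ℝ) : entTerm a r ≠ ⊤ := by
  unfold entTerm
  split_ifs
  · simp
  · simp
  · exact EReal.coe_ne_top _

theorem sum_ne_top_of {ι : Type*} (s : Finset ι) (f : ι → EReal) (h : ∀ i, f i ≠ ⊤) :
    ∑ i ∈ s, f i ≠ ⊤ := by
  classical
  induction s using Finset.induction_on with
  | empty => simp
  | insert i s hi ih =>
    rw [Finset.sum_insert hi]
    exact EReal.add_ne_top (h i) ih

open Topology in
theorem entTerm_continuousAt {p r : ℝ} (hp : p ≠ 0) (hr : r ≠ 0) :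
    ContinuousAt (fun z : ℝ × ℝ => entTerm z.1 z.2) (p, r) := by
  have h1 : ContinuousAt (fun z : ℝ × ℝ => ((z.1 * Real.log (z.2 / z.1) : ℝ) : EReal)) (p, r) := by
    refine continuous_coe_real_ereal.continuousAt.comp ?_
    refine continuousAt_fst.mul (ContinuousAt.log (continuousAt_snd.div continuousAt_fst hp) ?_)
    exact div_ne_zero hr hp
  refine h1.congr ?_
  have e1 : ∀ᶠ z : ℝ × ℝ in 𝓝 (p, r), z.1 ≠ 0 := continuousAt_fst.eventually_ne hp
  have e2 : ∀ᶠ z : ℝ × ℝ in 𝓝 (p, r), z.2 ≠ 0 := continuousAt_snd.eventually_ne hr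
  filter_upwards [e1, e2] with z h1 h2
  simp [entTerm, h1, h2]

open Topology in
theorem entTerm_lt_near_bot {p : ℝ} (hp : 0 < p) (c : ℝ) :
    ∀ᶠ z : ℝ × ℝ in 𝓝 (p, 0), entTerm z.1 z.2 < (c : EReal) := by
  have e1 : ∀ᶠ z : ℝ × ℝ in 𝓝 (p, (0 : ℝ)), z.1 ≠ 0 := continuousAt_fst.eventually_ne hp.ne'
  set l : Filter (ℝ × ℝ) := 𝓝 (p, (0 : ℝ)) ⊓ 𝓟 {z | z.2 ≠ 0} with hl
  have t1 : Tendsto (fun z : ℝ × ℝ => z.1) l (𝓝 p) :=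
    (continuousAt_fst (p := (p, (0 : ℝ)))).tendsto.mono_left inf_le_left
  have t2 : Tendsto (fun z : ℝ × ℝ => z.2) l (𝓝 0) :=
    (continuousAt_snd (p := (p, (0 : ℝ)))).tendsto.mono_left inf_le_left
  have t3 : Tendsto (fun z : ℝ × ℝ => z.2 / z.1) l (𝓝[≠] 0) := by
    refine tendsto_nhdsWithin_iff.2 ⟨?_, ?_⟩
    · have := t2.div t1 hp.ne'
      rw [zero_div] at this
      exact this
    · have e1' : ∀ᶠ z : ℝ × ℝ in l, z.1 ≠ 0 := e1.filter_mono inf_le_left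
      have e2' : ∀ᶠ z : ℝ × ℝ in l, z.2 ≠ 0 := by
        rw [hl]; exact mem_inf_of_right (mem_principal_self _)
      filter_upwards [e1', e2'] with z h1 h2
      exact div_ne_zero h2 h1
  have t4 : Tendsto (fun z : ℝ × ℝ => z.1 * Real.log (z.2 / z.1)) l atBot :=
    t1.pos_mul_atBot hp (Real.tendsto_log_nhdsNE_zero.comp t3)
  have e3 := t4.eventually_lt_atBot c
  rw [hl, eventually_inf_principal] at e3
  filter_upwards [e1, e3] with z h1 h3
  by_cases h2 : z.2 = 0
  · simp [entTerm, h1, h2]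
  · simp only [entTerm, h1, h2, if_false]
    exact_mod_cast h3 h2

open Topology in
theorem entTerm_usc {p r : ℝ} (hp : 0 ≤ p) :
    UpperSemicontinuousWithinAt (fun z : ℝ × ℝ => entTerm z.1 z.2) {z | 0 ≤ z.1} (p, r) := by
  rcases hp.eq_or_lt with rfl | hp
  · intro c hc
    have hc : (0 : EReal) < c := by simpa [entTerm] using hc
    obtain ⟨y, hy0, hyc⟩ := EReal.lt_iff_exists_real_btwn.1 hc
    have hy0 : 0 < y := by exact_mod_cast hy0
    have e1 : ∀ᶠ z : ℝ × ℝ in 𝓝 ((0 : ℝ), r), |z.2| < |r| + 1 := by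
      have : ContinuousAt (fun z : ℝ × ℝ => |z.2|) ((0 : ℝ), r) := by fun_prop
      exact this.eventually_lt continuousAt_const (by simp)
    have e2 : ∀ᶠ z : ℝ × ℝ in 𝓝 ((0 : ℝ), r),
        z.1 * Real.log (|r| + 1) + Real.negMulLog z.1 < y := by
      have : Continuous (fun z : ℝ × ℝ => z.1 * Real.log (|r| + 1) + Real.negMulLog z.1) := by
        have := Real.continuous_negMulLog
        fun_prop
      exact this.continuousAt.eventually_lt continuousAt_const (by simpa using hy0)
    filter_upwards [mem_nhdsWithin_of_mem_nhds e1, mem_nhdsWithin_of_mem_nhds e2,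
      self_mem_nhdsWithin] with z h1 h2 h3
    have h3 : 0 ≤ z.1 := h3
    by_cases hz : z.1 = 0
    · simpa [entTerm, hz] using hc
    by_cases hz2 : z.2 = 0
    · simpa [entTerm, hz, hz2] using bot_lt_of_lt hc
    simp only [entTerm, hz, hz2, if_false]
    refine lt_trans ?_ hyc
    have hz' : 0 < z.1 := lt_of_le_of_ne h3 (Ne.symm hz)
    have : z.1 * Real.log (z.2 / z.1) < y := by
      refine lt_of_le_of_lt ?_ h2
      rw [Real.log_div hz2 hz, Real.negMulLog, mul_sub, ← Real.log_abs z.2]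
      have : Real.log |z.2| ≤ Real.log (|r| + 1) :=
        Real.log_le_log (abs_pos.2 hz2) h1.le
      nlinarith
    exact_mod_cast this
  · by_cases hr : r = 0
    · subst hr
      intro c hc
      have hc : (⊥ : EReal) < c := by simpa [entTerm, hp.ne'] using hc
      obtain ⟨y, hy0, hyc⟩ := EReal.lt_iff_exists_real_btwn.1 hc
      filter_upwards [mem_nhdsWithin_of_mem_nhds (entTerm_lt_near_bot hp y)] with z hz
      exact lt_trans hz hyc
    · exact (entTerm_continuousAt hp.ne' hr).upperSemicontinuousAt.upperSemicontinuousWithinAt _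

theorem entTerm_continuous {p : ℝ} (hp : 0 ≤ p) : Continuous (fun r => entTerm p r) := by
  rcases hp.eq_or_lt with rfl | hp
  · simpa [entTerm] using continuous_const
  rw [continuous_iff_continuousAt]
  intro r
  have hc : ContinuousAt (fun r : ℝ => (p, r)) r := by fun_prop
  by_cases hr : r = 0
  · subst hr
    have : entTerm p 0 = ⊥ := by simp [entTerm, hp.ne']
    rw [ContinuousAt, this, EReal.tendsto_nhds_bot_iff_real]
    intro c
    exact hc.tendsto.eventually (entTerm_lt_near_bot hp c)
  · exact ContinuousAt.comp (g := fun z : ℝ × ℝ => entTerm z.1 z.2) (entTerm_continuousAt hp.ne' hr) hc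

theorem sumEnt_continuous {k : ℕ} (p : Fin k → ℝ) (hp : ∀ i, 0 ≤ p i) :
    Continuous (fun r : Fin k → ℝ => ∑ i, entTerm (p i) (r i)) := by
  suffices H : ∀ s : Finset (Fin k), Continuous (fun r : Fin k → ℝ => ∑ i ∈ s, entTerm (p i) (r i))
    from H _
  intro s
  induction s using Finset.induction_on with
  | empty => simpa using continuous_const
  | insert i s hi ih =>
    simp only [Finset.sum_insert hi]
    rw [continuous_iff_continuousAt] at ih ⊢
    intro r
    have h1 : ContinuousAt (fun r : Fin k → ℝ => entTerm (p i) (r i)) r :=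
      ((entTerm_continuous (hp i)).comp (continuous_apply i)).continuousAt
    exact ContinuousAt.comp (g := fun z : EReal × EReal => z.1 + z.2)
      (EReal.continuousAt_add (.inl (entTerm_ne_top _ _))
        (.inr (sum_ne_top_of _ _ fun i => entTerm_ne_top _ _))) (h1.prodMk (ih r))

theorem sumEnt_usc {k : ℕ} (p r : Fin k → ℝ) (hp : ∀ i, 0 ≤ p i) :
    UpperSemicontinuousWithinAt
      (fun z : (Fin k → ℝ) × (Fin k → ℝ) => ∑ i, entTerm (z.1 i) (z.2 i))
      {z | ∀ i, 0 ≤ z.1 i} (p, r) := by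
  suffices H : ∀ s : Finset (Fin k), UpperSemicontinuousWithinAt
      (fun z : (Fin k → ℝ) × (Fin k → ℝ) => ∑ i ∈ s, entTerm (z.1 i) (z.2 i))
      {z | ∀ i, 0 ≤ z.1 i} (p, r) from H _
  intro s
  induction s using Finset.induction_on with
  | empty => simpa using upperSemicontinuousWithinAt_const
  | insert i s hi ih =>
    simp only [Finset.sum_insert hi]
    refine UpperSemicontinuousWithinAt.add' ?_ ih
      (EReal.continuousAt_add (.inl (entTerm_ne_top _ _))
        (.inr (sum_ne_top_of _ _ fun i => entTerm_ne_top _ _)))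
    have hc : ContinuousWithinAt (fun z : (Fin k → ℝ) × (Fin k → ℝ) => (z.1 i, z.2 i))
        {z | ∀ i, 0 ≤ z.1 i} (p, r) := by
      apply Continuous.continuousWithinAt
      fun_prop
    have hm : Set.MapsTo (fun z : (Fin k → ℝ) × (Fin k → ℝ) => (z.1 i, z.2 i))
        {z | ∀ i, 0 ≤ z.1 i} {z : ℝ × ℝ | 0 ≤ z.1} := fun z hz => hz i
    exact UpperSemicontinuousWithinAt.comp (f := fun z : ℝ × ℝ => entTerm z.1 z.2)
      (g := fun z : (Fin k → ℝ) × (Fin k → ℝ) => (z.1 i, z.2 i))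
      (entTerm_usc (hp i)) hc hm

open Topology in
/-- Upper semicontinuity of the supremum over a bounded set. -/
theorem sSup_sumEnt_usc {k : ℕ} (R : Set (Fin k → ℝ)) (hR : Bornology.IsBounded R)
    (p : Fin k → ℝ) (hp : ∀ i, 0 ≤ p i) (c : EReal)
    (hc : sSup ((fun r => ∑ i, entTerm (p i) (r i)) '' R) < c) :
    ∀ᶠ q in 𝓝 p, (∀ i, 0 ≤ q i) → sSup ((fun r => ∑ i, entTerm (q i) (r i)) '' R) < c := by
  obtain ⟨c', h1, h2⟩ := exists_between hc
  have hK : IsCompact (closure R) := hR.isCompact_closure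
  have hle : ∀ r ∈ closure R, ∑ i, entTerm (p i) (r i) < c' := by
    intro r hr
    refine lt_of_le_of_lt ?_ h1
    have hcl : IsClosed {r : Fin k → ℝ | ∑ i, entTerm (p i) (r i) ≤
        sSup ((fun r => ∑ i, entTerm (p i) (r i)) '' R)} :=
      isClosed_le (sumEnt_continuous p hp) continuous_const
    have hsub : R ⊆ {r : Fin k → ℝ | ∑ i, entTerm (p i) (r i) ≤
        sSup ((fun r => ∑ i, entTerm (p i) (r i)) '' R)} :=
      fun r hr => le_sSup (a := ∑ i, entTerm (p i) (r i)) (Set.mem_image_of_mem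
        (fun r : Fin k → ℝ => ∑ i, entTerm (p i) (r i)) hr)
    exact closure_minimal hsub hcl hr
  have := hK.eventually_forall_of_forall_eventually (x₀ := p)
    (P := fun q r => (∀ i, 0 ≤ q i) → ∑ i, entTerm (q i) (r i) < c') (by
      intro r hr
      have := sumEnt_usc p r hp c' (hle r hr)
      exact eventually_nhdsWithin_iff.1 this)
  filter_upwards [this] with q hq hq0
  refine lt_of_le_of_lt (sSup_le ?_) h2
  rintro _ ⟨r, hr, rfl⟩
  exact (hq r (subset_closure hr) hq0).le

theorem entTerm_concave {a b p q r s : ℝ} (ha : 0 < a) (hb : 0 < b)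
    (hp : 0 ≤ p) (hq : 0 ≤ q) (hr : 0 ≤ r) (hs : 0 ≤ s) :
    (a : EReal) * entTerm p r + (b : EReal) * entTerm q s ≤
      entTerm (a * p + b * q) (a * r + b * s) := by
  have hbot : ∀ {x : ℝ}, 0 < x → (x : EReal) * ⊥ = ⊥ := fun h => EReal.coe_mul_bot_of_pos h
  rcases hp.eq_or_lt with rfl | hp
  · rcases hq.eq_or_lt with rfl | hq
    · simp [entTerm]
    rcases hs.eq_or_lt with rfl | hs
    · simp [entTerm, hq.ne', hbot hb]
    have h1 : 0 < a * r + b * s := by positivity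
    have h2 : b * q ≠ 0 := by positivity
    simp only [entTerm, mul_zero, zero_add, if_true, hq.ne', hs.ne', h1.ne', h2, if_false]
    norm_cast
    rw [← mul_assoc]
    refine mul_le_mul_of_nonneg_left (Real.log_le_log (by positivity) ?_) (by positivity)
    rw [div_le_div_iff₀ hq (by positivity)]
    nlinarith [mul_nonneg (mul_nonneg ha.le hr) hq.le]
  rcases hr.eq_or_lt with rfl | hr
  · simp [entTerm, hp.ne', hbot ha]
  rcases hq.eq_or_lt with rfl | hq
  · have h1 : 0 < a * r + b * s := by positivity
    have h2 : a * p ≠ 0 := by positivity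
    simp only [entTerm, mul_zero, add_zero, if_true, hp.ne', hr.ne', h1.ne', h2, if_false]
    norm_cast
    rw [← mul_assoc]
    refine mul_le_mul_of_nonneg_left (Real.log_le_log (by positivity) ?_) (by positivity)
    rw [div_le_div_iff₀ hp (by positivity)]
    nlinarith [mul_nonneg (mul_nonneg hb.le hs) hp.le]
  rcases hs.eq_or_lt with rfl | hs
  · simp [entTerm, hq.ne', hbot hb]
  have h1 : 0 < a * r + b * s := by positivity
  have h2 : 0 < a * p + b * q := by positivity
  simp only [entTerm, hp.ne', hr.ne', hq.ne', hs.ne', h1.ne', h2.ne', if_false]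
  norm_cast
  have w1 : 0 ≤ a * p / (a * p + b * q) := by positivity
  have w2 : 0 ≤ b * q / (a * p + b * q) := by positivity
  have w3 : a * p / (a * p + b * q) + b * q / (a * p + b * q) = 1 := by field_simp
  have x1 : r / p ∈ Set.Ioi (0 : ℝ) := Set.mem_Ioi.2 (by positivity)
  have x2 : s / q ∈ Set.Ioi (0 : ℝ) := Set.mem_Ioi.2 (by positivity)
  have key := strictConcaveOn_log_Ioi.concaveOn.2 x1 x2 w1 w2 w3
  have e : (a * p / (a * p + b * q)) • (r / p) + (b * q / (a * p + b * q)) • (s / q) =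
      (a * r + b * s) / (a * p + b * q) := by
    simp only [smul_eq_mul]
    field_simp
  rw [e] at key
  simp only [smul_eq_mul] at key
  have := mul_le_mul_of_nonneg_left key h2.le
  refine le_trans (le_of_eq ?_) this
  field_simp

theorem coe_mul_add' {a : ℝ} (ha : 0 ≤ a) (x y : EReal) :
    (a : EReal) * (x + y) = a * x + a * y :=
  EReal.left_distrib_of_nonneg_of_ne_top (by exact_mod_cast ha) (EReal.coe_ne_top _) x y

theorem sumEnt_concave {k : ℕ} {a b : ℝ} (ha : 0 < a) (hb : 0 < b) (p q r s : Fin k → ℝ)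
    (hp : ∀ i, 0 ≤ p i) (hq : ∀ i, 0 ≤ q i) (hr : ∀ i, 0 ≤ r i) (hs : ∀ i, 0 ≤ s i) :
    (a : EReal) * ∑ i, entTerm (p i) (r i) + (b : EReal) * ∑ i, entTerm (q i) (s i) ≤
      ∑ i, entTerm (a * p i + b * q i) (a * r i + b * s i) := by
  suffices H : ∀ t : Finset (Fin k),
      (a : EReal) * ∑ i ∈ t, entTerm (p i) (r i) + (b : EReal) * ∑ i ∈ t, entTerm (q i) (s i) ≤
      ∑ i ∈ t, entTerm (a * p i + b * q i) (a * r i + b * s i) from H _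
  intro t
  induction t using Finset.induction_on with
  | empty => simp
  | insert i t hi ih =>
    simp only [Finset.sum_insert hi]
    rw [coe_mul_add' ha.le, coe_mul_add' hb.le, add_add_add_comm]
    exact add_le_add (entTerm_concave ha hb (hp i) (hq i) (hr i) (hs i)) ih

theorem coe_mul_sSup_add_le {a b : ℝ} (ha : 0 < a) (hb : 0 < b) (S T : Set EReal) (c : EReal)
    (h : ∀ s ∈ S, ∀ t ∈ T, (a : EReal) * s + b * t ≤ c) :
    (a : EReal) * sSup S + b * sSup T ≤ c := by
  have aux : ∀ {a : ℝ} (_ : 0 < a) (S : Set EReal) (x : EReal), x < (a : EReal) * sSup S →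
      ∃ s ∈ S, x < (a : EReal) * s := by
    intro a ha S x hx
    by_contra! hcon
    refine absurd hx (not_lt.2 ?_)
    have ha0 : (0 : EReal) < a := by exact_mod_cast ha
    rw [mul_comm, ← EReal.le_div_iff_mul_le ha0 (EReal.coe_ne_top _)]
    refine sSup_le fun s hs => ?_
    rw [EReal.le_div_iff_mul_le ha0 (EReal.coe_ne_top _), mul_comm]
    exact hcon s hs
  refine EReal.add_le_of_forall_lt fun x hx y hy => ?_
  obtain ⟨s, hs, hxs⟩ := aux ha S x hx
  obtain ⟨t, ht, hyt⟩ := aux hb T y hy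
  exact (add_le_add hxs.le hyt.le).trans (h s hs t ht)

theorem map_iterate_le {X : Type*} [MeasurableSpace X] {m : Measure X} {α : X → X}
    (hα : Measurable α) (hbdd : ShiftBounded m α) (n : ℕ) :
    ∃ C : ℝ≥0, Measure.map (α^[n]) m ≤ C • m := by
  obtain ⟨C, -, hC⟩ := hbdd
  refine ⟨C ^ n, Measure.le_iff.2 fun G hG => ?_⟩
  rw [Measure.map_apply (hα.iterate n) hG]
  induction n generalizing G with
  | zero => simp
  | succ n ih =>
    rw [Function.iterate_succ', Set.preimage_comp]
    refine (ih _ (hα hG)).trans ?_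
    have := hC G hG
    simp only [Measure.smul_apply, ENNReal.smul_def, smul_eq_mul] at this ⊢
    rw [pow_succ]
    push_cast
    rw [mul_assoc]
    gcongr

theorem integrable_comp_iterate {X : Type*} [MeasurableSpace X] {m : Measure X} {α : X → X}
    (hα : Measurable α) {n : ℕ} {C : ℝ≥0} (hC : Measure.map (α^[n]) m ≤ C • m)
    {f : X → ℝ} (hf : Integrable f m) : Integrable (fun x => |f (α^[n] x)|) m ∧
      ∫ x, |f (α^[n] x)| ∂m ≤ C * ∫ x, |f x| ∂m := by
  have h1 : Integrable (fun x => |f x|) (C • m) := hf.abs.smul_measure_nnreal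
  have h2 := h1.mono_measure hC
  refine ⟨h2.comp_measurable (hα.iterate n), ?_⟩
  have h3 := integral_map (hα.iterate n).aemeasurable h2.1
  rw [← h3]
  refine (integral_mono_measure hC (ae_of_all _ fun x => abs_nonneg _) h1).trans (le_of_eq ?_)
  rw [integral_smul_nnreal_measure]
  rfl

theorem ae_bound_Linf {X : Type*} [MeasurableSpace X] {m : Measure X} (g : Lp ℝ ⊤ m) :
    ∀ᵐ x ∂m, ‖g x‖ ≤ ‖g‖ := by
  have := ae_le_eLpNormEssSup (f := ⇑g) (μ := m)
  filter_upwards [this] with x hx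
  rw [Lp.norm_def, eLpNorm_exponent_top]
  have hfin := Lp.eLpNorm_ne_top g
  rw [eLpNorm_exponent_top] at hfin
  simpa using ENNReal.toReal_mono hfin hx

theorem integrable_mul_comp {X : Type*} [MeasurableSpace X] {m : Measure X} {α : X → X}
    (hα : Measurable α) {n : ℕ} {C : ℝ≥0} (hC : Measure.map (α^[n]) m ≤ C • m)
    (g : Lp ℝ ⊤ m) {f : X → ℝ} (hf : Integrable f m) :
    Integrable (fun x => g x * |f (α^[n] x)|) m :=
  (integrable_comp_iterate hα hC hf).1.bdd_mul (Lp.aestronglyMeasurable g) (ae_bound_Linf g)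

theorem tauN_eq {X : Type*} [MeasurableSpace X] {m : Measure X} {α : X → X}
    (hα : Measurable α) (hbdd : ShiftBounded m α) (n : ℕ) (D : PartUnity m) :
    ∃ R : Set (Fin D.k → ℝ), Bornology.IsBounded R ∧ ∀ μ : Lp ℝ ⊤ m → ℝ,
      tauN m α μ n D = sSup ((fun r => ∑ i, entTerm (μ (D.g i)) (r i)) '' R) := by
  refine ⟨{r | ∃ f : X → ℝ, Integrable f m ∧ (∫ x, |f x| ∂m) = 1 ∧
    r = fun i => ∫ x, (D.g i : Lp ℝ ⊤ m) x * |f (α^[n] x)| ∂m}, ?_, ?_⟩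
  · obtain ⟨C, hC⟩ := map_iterate_le hα hbdd n
    refine isBounded_iff_forall_norm_le.2 ⟨∑ i, ‖D.g i‖ * C, ?_⟩
    rintro _ ⟨f, hf, hf1, rfl⟩
    refine (pi_norm_le_iff_of_nonneg (by positivity)).2 fun i => ?_
    have hi : ‖D.g i‖ * C ≤ ∑ i, ‖D.g i‖ * C :=
      Finset.single_le_sum (f := fun i => ‖D.g i‖ * (C : ℝ)) (fun i _ => by positivity)
        (Finset.mem_univ i)
    refine le_trans ?_ hi
    obtain ⟨h1, h2⟩ := integrable_comp_iterate hα hC hf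
    rw [hf1, mul_one] at h2
    calc ‖∫ x, (D.g i : Lp ℝ ⊤ m) x * |f (α^[n] x)| ∂m‖
        ≤ ∫ x, ‖D.g i‖ * |f (α^[n] x)| ∂m := by
          refine norm_integral_le_of_norm_le (h1.const_mul _) ?_
          filter_upwards [ae_bound_Linf (D.g i)] with x hx
          rw [norm_mul, Real.norm_eq_abs |f (α^[n] x)|, abs_abs]
          gcongr
      _ = ‖D.g i‖ * ∫ x, |f (α^[n] x)| ∂m := integral_const_mul _ _
      _ ≤ ‖D.g i‖ * C := by gcongr
  · intro μ
    unfold tauN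
    congr 1
    ext r
    constructor
    · rintro ⟨f, h1, h2, rfl⟩
      exact ⟨_, ⟨f, h1, h2, rfl⟩, rfl⟩
    · rintro ⟨_, ⟨f, h1, h2, rfl⟩, rfl⟩
      exact ⟨f, h1, h2, rfl⟩

theorem tauN_concave {X : Type*} [MeasurableSpace X] {m : Measure X} {α : X → X}
    (hα : Measurable α) (hbdd : ShiftBounded m α) (n : ℕ) (D : PartUnity m)
    (μ ν : WeakDual ℝ (Lp ℝ ⊤ m)) (hμ : MemMalpha m α ⇑μ) (hν : MemMalpha m α ⇑ν)
    {a b : ℝ} (ha : 0 < a) (hb : 0 < b) (hab : a + b = 1) :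
    (a : EReal) * tauN m α ⇑μ n D + (b : EReal) * tauN m α ⇑ν n D ≤
      tauN m α ⇑(a • μ + b • ν) n D := by
  obtain ⟨C, hC⟩ := map_iterate_le hα hbdd n
  refine coe_mul_sSup_add_le ha hb _ _ _ ?_
  rintro _ ⟨f, hf, hf1, rfl⟩ _ ⟨h, hh, hh1, rfl⟩
  have hnn : ∀ (f : X → ℝ) i, 0 ≤ ∫ x, (D.g i : Lp ℝ ⊤ m) x * |f (α^[n] x)| ∂m := by
    intro f i
    refine integral_nonneg_of_ae ?_
    filter_upwards [D.nonneg i] with x hx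
    exact mul_nonneg hx (abs_nonneg _)
  refine (sumEnt_concave ha hb _ _ _ _ (fun i => hμ.1 _ (D.nonneg i))
    (fun i => hν.1 _ (D.nonneg i)) (hnn f) (hnn h)).trans ?_
  have habs : ∀ x, |(a * |f x| + b * |h x|)| = a * |f x| + b * |h x| := fun x =>
    abs_of_nonneg (by positivity)
  refine le_sSup ⟨fun x => a * |f x| + b * |h x|, (hf.abs.const_mul a).add (hh.abs.const_mul b),
    ?_, ?_⟩
  · simp only [habs]
    rw [integral_add (hf.abs.const_mul a) (hh.abs.const_mul b), integral_const_mul,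
      integral_const_mul, hf1, hh1]
    linarith
  · refine Finset.sum_congr rfl fun i _ => ?_
    congr 1
    simp only [habs]
    rw [← integral_const_mul, ← integral_const_mul, ← integral_add
      ((integrable_mul_comp hα hC (D.g i) hf).const_mul a)
      ((integrable_mul_comp hα hC (D.g i) hh).const_mul b)]
    congr 1
    ext x
    ring

theorem MemMalpha.convex_comb {X : Type*} [MeasurableSpace X] {m : Measure X} {α : X → X}
    {μ ν : WeakDual ℝ (Lp ℝ ⊤ m)} (hμ : MemMalpha m α ⇑μ) (hν : MemMalpha m α ⇑ν)
    {a b : ℝ} (ha : 0 ≤ a) (hb : 0 ≤ b) (hab : a + b = 1) :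
    MemMalpha m α ⇑(a • μ + b • ν) := by
  have e : ∀ φ, (a • μ + b • ν) φ = a * μ φ + b * ν φ := fun φ => rfl
  refine ⟨fun φ h => ?_, fun φ h => ?_, fun φ ψ h => ?_⟩
  · have h1 := hμ.1 φ h
    have h2 := hν.1 φ h
    rw [e]
    positivity
  · rw [e, hμ.2.1 φ h, hν.2.1 φ h]
    linarith
  · rw [e, e, hμ.2.2 φ ψ h, hν.2.2 φ ψ h]

theorem isClosed_MemMalpha {X : Type*} [MeasurableSpace X] (m : Measure X) (α : X → X) :
    IsClosed {μ : WeakDual ℝ (Lp ℝ ⊤ m) | MemMalpha m α ⇑μ} := by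
  have hev : ∀ φ : Lp ℝ ⊤ m, Continuous (fun μ : WeakDual ℝ (Lp ℝ ⊤ m) => μ φ) :=
    fun φ => WeakDual.eval_continuous φ
  have h1 : IsClosed {μ : WeakDual ℝ (Lp ℝ ⊤ m) | IsPositiveFunctional m ⇑μ} := by
    simp only [IsPositiveFunctional, Set.ofPred_forall]
    exact isClosed_iInter fun φ => isClosed_iInter fun _ => isClosed_le continuous_const (hev φ)
  have h2 : IsClosed {μ : WeakDual ℝ (Lp ℝ ⊤ m) | IsNormalizedFunctional m ⇑μ} := by
    simp only [IsNormalizedFunctional, Set.ofPred_forall]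
    exact isClosed_iInter fun φ => isClosed_iInter fun _ => isClosed_eq (hev φ) continuous_const
  have h3 : IsClosed {μ : WeakDual ℝ (Lp ℝ ⊤ m) | IsInvariantFunctional m α ⇑μ} := by
    simp only [IsInvariantFunctional, Set.ofPred_forall]
    exact isClosed_iInter fun φ => isClosed_iInter fun ψ => isClosed_iInter fun _ =>
      isClosed_eq (hev ψ) (hev φ)
  exact h1.inter (h2.inter h3)

/-- **Remark 8**: the t-entropy, extended by `τ(μ) = −∞` for functionals not in
`M_α(X, m)`, is concave and upper semicontinuous in the weak-* topology on the dual
of `L^∞(X, m)`. -/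
theorem tEntropyExt_upperSemicontinuous_concave
    {X : Type*} [MeasurableSpace X] (m : Measure X) (α : X → X)
    (hα : Measurable α) (hbdd : ShiftBounded m α) :
    UpperSemicontinuous (fun μ : WeakDual ℝ (Lp ℝ ⊤ m) => tEntropyExt m α ⇑μ) ∧
    ∀ (μ ν : WeakDual ℝ (Lp ℝ ⊤ m)) (a b : ℝ), 0 ≤ a → 0 ≤ b → a + b = 1 →
      ((a : ℝ) : EReal) * tEntropyExt m α ⇑μ + ((b : ℝ) : EReal) * tEntropyExt m α ⇑ν ≤
        tEntropyExt m α ⇑(a • μ + b • ν) := by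
  have hin : ∀ μ : Lp ℝ ⊤ m → ℝ, MemMalpha m α μ → tEntropyExt m α μ = tEntropy m α μ :=
    fun μ h => if_pos h
  have hout : ∀ μ : Lp ℝ ⊤ m → ℝ, ¬ MemMalpha m α μ → tEntropyExt m α μ = ⊥ :=
    fun μ h => if_neg h
  refine ⟨?_, ?_⟩
  · intro μ₀ c hc
    have hc : tEntropyExt m α ⇑μ₀ < c := hc
    by_cases h0 : MemMalpha m α ⇑μ₀
    · rw [hin _ h0] at hc
      have hc2 := hc
      simp only [tEntropy, iInf_lt_iff] at hc2
      obtain ⟨n, hn, D, hD⟩ := hc2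
      have hn0 : (0 : ℝ) < (n : ℝ)⁻¹ := by positivity
      have hn1 : (0 : EReal) < (((n : ℝ)⁻¹ : ℝ) : EReal) := by exact_mod_cast hn0
      obtain ⟨R, hR, hRe⟩ := tauN_eq hα hbdd n D
      rw [mul_comm, ← EReal.lt_div_iff hn1 (EReal.coe_ne_top _), hRe] at hD
      have hcont : Continuous (fun μ : WeakDual ℝ (Lp ℝ ⊤ m) => fun i => μ (D.g i)) :=
        continuous_pi fun i => WeakDual.eval_continuous (D.g i)
      have hev := hcont.continuousAt.eventually
        (sSup_sumEnt_usc R hR (fun i => μ₀ (D.g i)) (fun i => h0.1 _ (D.nonneg i)) _ hD)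
      filter_upwards [hev] with μ hμ
      show tEntropyExt m α ⇑μ < c
      by_cases h : MemMalpha m α ⇑μ
      · rw [hin _ h]
        have h1 := hμ (fun i => h.1 _ (D.nonneg i))
        rw [← hRe, EReal.lt_div_iff hn1 (EReal.coe_ne_top _), mul_comm] at h1
        refine lt_of_le_of_lt ?_ h1
        exact (iInf_le _ n).trans ((iInf_le _ hn).trans (iInf_le _ D))
      · rw [hout _ h]
        exact bot_lt_of_lt hc
    · have hop := (isClosed_MemMalpha m α).isOpen_compl.mem_nhds h0
      filter_upwards [hop] with μ hμ
      show tEntropyExt m α ⇑μ < c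
      rw [hout _ hμ]
      exact bot_lt_of_lt hc
  · intro μ ν a b ha hb hab
    rcases ha.eq_or_lt with rfl | ha
    · obtain rfl : b = 1 := by linarith
      simp
    rcases hb.eq_or_lt with rfl | hb
    · obtain rfl : a = 1 := by linarith
      simp
    by_cases hμ : MemMalpha m α ⇑μ
    swap
    · rw [hout _ hμ, EReal.coe_mul_bot_of_pos ha, EReal.bot_add]
      exact bot_le
    by_cases hν : MemMalpha m α ⇑ν
    swap
    · rw [hout _ hν, EReal.coe_mul_bot_of_pos hb, EReal.add_bot]
      exact bot_le
    rw [hin _ hμ, hin _ hν, hin _ (hμ.convex_comb hν ha.le hb.le hab)]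
    refine le_iInf fun n => le_iInf fun hn => le_iInf fun D => ?_
    have hle : ∀ μ : Lp ℝ ⊤ m → ℝ,
        tEntropy m α μ ≤ (((n : ℝ)⁻¹ : ℝ) : EReal) * tauN m α μ n D := fun μ =>
      (iInf_le _ n).trans ((iInf_le _ hn).trans (iInf_le _ D))
    have hn0 : (0 : ℝ) ≤ (n : ℝ)⁻¹ := by positivity
    have hn1 : (0 : EReal) ≤ (((n : ℝ)⁻¹ : ℝ) : EReal) := by exact_mod_cast hn0
    have ha1 : (0 : EReal) ≤ (a : EReal) := by exact_mod_cast ha.le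
    have hb1 : (0 : EReal) ≤ (b : EReal) := by exact_mod_cast hb.le
    refine (add_le_add (mul_le_mul_of_nonneg_left (hle _) ha1)
      (mul_le_mul_of_nonneg_left (hle _) hb1)).trans ?_
    rw [mul_left_comm, mul_left_comm (b : EReal), ← coe_mul_add' hn0]
    exact mul_le_mul_of_nonneg_left (tauN_concave hα hbdd n D μ ν hμ hν ha hb hab) hn1

end
end
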